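/- θ(1) = π^{1/4}/Γ(3/4), where θ(t) = 1 + 2Σ_{n≥1} e^{-πn²t}. -/

import Mathlib

/-- The Jacobi theta function `θ(t) = ∑_{n ∈ ℤ} e^{-π n² t}` for real `t`. -/
noncomputable def theta (t : ℝ) : ℝ := ∑' n : ℤ, Real.exp (-Real.pi * (n : ℝ)^2 * t)

open Real Set Filter Topology MeasureTheory HurwitzZeta

/-!
The rotation `(j, k) ↦ (j + k, j - k)` maps `ℤ²` onto a sublattice of index two, so that products of
two theta series at `t` are sums of products at `2 t`. Together with the modular transformation
`t ↦ 1 / t` this shows that passing from `t` to `2 t` replaces `θ²` and `θ₄²` by their arithmetic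
and geometric means. Gauss's integral `∫ dx / √((x² + a²) (x² + b²))` is invariant under that
replacement, and `θ`, `θ₄` tend to `1` at infinity, so the integral with `a = θ(t)²`, `b = θ₄(t)²`
equals `π` for every `t > 0`. At the fixed point `t = 1` of the modular transformation
`θ₂ = θ₄`, and Jacobi's identity `θ⁴ = θ₂⁴ + θ₄⁴` gives `b = a / √2`; for this ratio the integral is
lemniscatic and reduces to a Beta value.
-/

theorem hasSum_of_hasSum_add_sub {E : Type*} [AddCommMonoid E] [TopologicalSpace E]
    [ContinuousAdd E] {f : ℤ × ℤ → E} {a b : E}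
    (heven : HasSum (fun p : ℤ × ℤ ↦ f (p.1 + p.2, p.1 - p.2)) a)
    (hodd : HasSum (fun p : ℤ × ℤ ↦ f (p.1 + p.2 + 1, p.1 - p.2)) b) :
    HasSum f (a + b) := by
  let e : (ℤ × ℤ) ⊕ (ℤ × ℤ) → ℤ × ℤ :=
    Sum.elim (fun p ↦ (p.1 + p.2, p.1 - p.2)) (fun p ↦ (p.1 + p.2 + 1, p.1 - p.2))
  have he : e.Bijective := by
    constructor
    · rintro (⟨j, k⟩ | ⟨j, k⟩) (⟨j', k'⟩ | ⟨j', k'⟩) h <;>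
        simp only [e, Sum.elim_inl, Sum.elim_inr, Prod.mk.injEq, Sum.inl.injEq, Sum.inr.injEq,
          reduceCtorEq] at h ⊢ <;>
        omega
    · rintro ⟨m, n⟩
      obtain ⟨k, hk | hk⟩ := Int.even_or_odd' (m + n)
      · exact ⟨.inl (k, m - k), Prod.ext (by simp [e]) (by simp [e]; omega)⟩
      · exact ⟨.inr (k, m - k - 1), Prod.ext (by simp [e]; omega) (by simp [e]; omega)⟩
  exact (Equiv.ofBijective e he).hasSum_iff.1 (HasSum.sum heven hodd)

theorem hasSum_evenKernel_mul_evenKernel (a b : ℝ) {t : ℝ} (ht : 0 < t) :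
    HasSum (fun p : ℤ × ℤ ↦ exp (-π * ((p.1 + a) ^ 2 + (p.2 + b) ^ 2) * t))
      (evenKernel a t * evenKernel b t) := by
  have ha := hasSum_int_evenKernel a ht
  have hb := hasSum_int_evenKernel b ht
  refine (ha.mul hb (ha.summable.mul_of_nonneg hb.summable (fun _ ↦ (exp_pos _).le)
    fun _ ↦ (exp_pos _).le)).congr_fun fun p ↦ ?_
  rw [← exp_add]
  congr 1
  ring

theorem evenKernel_add_mul_evenKernel_sub (u v : ℝ) {t : ℝ} (ht : 0 < t) :
    evenKernel ↑(u + v) t * evenKernel ↑(u - v) t =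
      evenKernel u (2 * t) * evenKernel v (2 * t) +
        evenKernel ↑(u + 1 / 2) (2 * t) * evenKernel ↑(v + 1 / 2) (2 * t) := by
  refine (hasSum_evenKernel_mul_evenKernel _ _ ht).unique (hasSum_of_hasSum_add_sub ?_ ?_)
  · refine (hasSum_evenKernel_mul_evenKernel u v (by positivity : 0 < 2 * t)).congr_fun fun p ↦ ?_
    push_cast
    ring_nf
  · refine (hasSum_evenKernel_mul_evenKernel (u + 1 / 2) (v + 1 / 2)
      (by positivity : 0 < 2 * t)).congr_fun fun p ↦ ?_
    push_cast
    ring_nf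

theorem evenKernel_pos (a : UnitAddCircle) {t : ℝ} (ht : 0 < t) : 0 < evenKernel a t := by
  induction a using QuotientAddGroup.induction_on with | H a =>
  have h := hasSum_int_evenKernel a ht
  exact h.tsum_eq ▸ h.summable.tsum_pos (fun _ ↦ (exp_pos _).le) 0 (exp_pos _)

theorem tendsto_cosKernel_atTop (a : UnitAddCircle) : Tendsto (cosKernel a) atTop (𝓝 1) := by
  obtain ⟨p, hp, hO⟩ := isBigO_atTop_cosKernel_sub a
  have hexp : Tendsto (fun t ↦ exp (-p * t)) atTop (𝓝 0) :=
    tendsto_exp_atBot.comp (tendsto_id.const_mul_atTop_of_neg (neg_lt_zero.2 hp))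
  simpa using (hO.trans_tendsto hexp).add_const 1

theorem theta_eq_evenKernel {t : ℝ} (ht : 0 < t) : theta t = evenKernel 0 t := by
  simpa [theta] using (hasSum_int_evenKernel 0 ht).tsum_eq

theorem theta_eq_cosKernel {t : ℝ} (ht : 0 < t) : theta t = cosKernel 0 t := by
  rw [theta_eq_evenKernel ht, evenKernel_eq_cosKernel_of_zero]

/-- The Jacobi theta constant `θ₂(it) = ∑_{n ∈ ℤ} e^{-π (n + 1/2)² t}`, as a value of
the Hurwitz kernel. -/
noncomputable def thetaTwo (t : ℝ) : ℝ := evenKernel ((1 / 2 : ℝ) : UnitAddCircle) t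

/-- The Jacobi theta constant `θ₄(it) = ∑_{n ∈ ℤ} (-1)ⁿ e^{-π n² t}`, as a value of
the cosine kernel. -/
noncomputable def thetaFour (t : ℝ) : ℝ := cosKernel ((1 / 2 : ℝ) : UnitAddCircle) t

theorem theta_pos {t : ℝ} (ht : 0 < t) : 0 < theta t :=
  theta_eq_evenKernel ht ▸ evenKernel_pos 0 ht

theorem evenKernel_inv (a : UnitAddCircle) (t : ℝ) : evenKernel a t⁻¹ = √t * cosKernel a t := by
  rw [evenKernel_functional_equation, ← sqrt_eq_rpow, sqrt_inv, one_div, inv_inv, one_div, inv_inv]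

theorem theta_inv {t : ℝ} (ht : 0 < t) : theta t⁻¹ = √t * theta t := by
  rw [theta_eq_evenKernel (inv_pos.2 ht), theta_eq_cosKernel ht, evenKernel_inv]

theorem thetaTwo_inv (t : ℝ) : thetaTwo t⁻¹ = √t * thetaFour t :=
  evenKernel_inv _ t

theorem thetaFour_pos {t : ℝ} (ht : 0 < t) : 0 < thetaFour t := by
  have h : 0 < √t * thetaFour t := thetaTwo_inv t ▸ evenKernel_pos _ (inv_pos.2 ht)
  exact pos_of_mul_pos_right h (sqrt_nonneg t)

theorem theta_sq {t : ℝ} (ht : 0 < t) :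
    theta t ^ 2 = theta (2 * t) ^ 2 + thetaTwo (2 * t) ^ 2 := by
  simpa [← sq, theta_eq_evenKernel, thetaTwo, ht] using evenKernel_add_mul_evenKernel_sub 0 0 ht

theorem thetaTwo_sq {t : ℝ} (ht : 0 < t) :
    thetaTwo t ^ 2 = 2 * theta (2 * t) * thetaTwo (2 * t) := by
  have hone : (↑(1 / 2 + 1 / 2 : ℝ) : UnitAddCircle) = 0 := by
    rw [add_halves, AddCircle.coe_period]
  have h := evenKernel_add_mul_evenKernel_sub (1 / 2) 0 ht
  rw [hone, add_zero, sub_zero, zero_add, QuotientAddGroup.mk_zero,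
    ← theta_eq_evenKernel (by positivity)] at h
  simp only [thetaTwo]
  linear_combination h

-- The modular transform of `theta_sq`.
theorem theta_sq_add_thetaFour_sq {t : ℝ} (ht : 0 < t) :
    theta t ^ 2 + thetaFour t ^ 2 = 2 * theta (2 * t) ^ 2 := by
  have h := theta_sq (inv_pos.2 (mul_pos two_pos ht))
  rw [show 2 * (2 * t)⁻¹ = t⁻¹ by field_simp, theta_inv (by positivity), theta_inv ht,
    thetaTwo_inv, mul_pow, mul_pow, mul_pow, sq_sqrt (by positivity), sq_sqrt ht.le] at h
  refine mul_left_cancel₀ ht.ne' ?_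
  linear_combination -h

-- The modular transform of `thetaTwo_sq`.
theorem theta_mul_thetaFour {t : ℝ} (ht : 0 < t) :
    theta t * thetaFour t = thetaFour (2 * t) ^ 2 := by
  have h := thetaTwo_sq (inv_pos.2 (mul_pos two_pos ht))
  rw [show 2 * (2 * t)⁻¹ = t⁻¹ by field_simp, theta_inv ht, thetaTwo_inv, thetaTwo_inv, mul_pow,
    sq_sqrt (by positivity)] at h
  refine mul_left_cancel₀ (mul_pos two_pos ht).ne' ?_
  linear_combination -h - 2 * theta t * thetaFour t * sq_sqrt ht.le

theorem theta_pow_four {t : ℝ} (ht : 0 < t) :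
    theta t ^ 4 = thetaTwo t ^ 4 + thetaFour t ^ 4 := by
  have hFour : thetaFour t ^ 2 = theta (2 * t) ^ 2 - thetaTwo (2 * t) ^ 2 := by
    linear_combination theta_sq_add_thetaFour_sq ht - theta_sq ht
  calc theta t ^ 4 = (theta (2 * t) ^ 2 + thetaTwo (2 * t) ^ 2) ^ 2 := by rw [← theta_sq ht]; ring
    _ = (2 * theta (2 * t) * thetaTwo (2 * t)) ^ 2 +
        (theta (2 * t) ^ 2 - thetaTwo (2 * t) ^ 2) ^ 2 := by ring
    _ = thetaTwo t ^ 4 + thetaFour t ^ 4 := by rw [← thetaTwo_sq ht, ← hFour]; ring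

theorem thetaFour_one_sq : thetaFour 1 ^ 2 = theta 1 ^ 2 * (√2)⁻¹ := by
  have hTwo : thetaTwo 1 = thetaFour 1 := by simpa using thetaTwo_inv 1
  have hquartic := theta_pow_four one_pos
  have hsq : (√2) ^ 2 = (2 : ℝ) := sq_sqrt two_pos.le
  rw [eq_mul_inv_iff_mul_eq₀ (by positivity)]
  refine (pow_left_inj₀ (by positivity) (by positivity) two_ne_zero).1 ?_
  rw [hTwo] at hquartic
  linear_combination thetaFour 1 ^ 4 * hsq - hquartic

theorem tendsto_theta_atTop : Tendsto theta atTop (𝓝 1) :=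
  (tendsto_cosKernel_atTop 0).congr' <|
    (eventually_gt_atTop 0).mono fun _ ht ↦ (theta_eq_cosKernel ht).symm

theorem tendsto_thetaFour_atTop : Tendsto thetaFour atTop (𝓝 1) :=
  tendsto_cosKernel_atTop _

theorem image_half_sub_div_Ioi {c : ℝ} (hc : 0 < c) :
    (fun t : ℝ ↦ (t - c / t) / 2) '' Ioi 0 = univ := by
  refine eq_univ_of_forall fun x ↦ ?_
  have hsq : √(x ^ 2 + c) ^ 2 = x ^ 2 + c := sq_sqrt (by positivity)
  have hlt : |x| < √(x ^ 2 + c) := lt_sqrt_of_sq_lt (by rw [sq_abs]; linarith)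
  have hpos : 0 < x + √(x ^ 2 + c) := by linarith [neg_abs_le x]
  refine ⟨x + √(x ^ 2 + c), hpos, ?_⟩
  field_simp
  linear_combination hsq

theorem integral_comp_half_sub_div {E : Type*} [NormedAddCommGroup E] [NormedSpace ℝ E]
    (f : ℝ → E) {c : ℝ} (hc : 0 < c) :
    ∫ t in Ioi 0, ((1 + c / t ^ 2) / 2) • f ((t - c / t) / 2) = ∫ x, f x := by
  have hmono : MonotoneOn (fun t : ℝ ↦ (t - c / t) / 2) (Ioi 0) := fun s hs t _ hst ↦ by
    have := div_le_div_of_nonneg_left hc.le hs hst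
    dsimp only
    linarith
  have hderiv : ∀ t ∈ Ioi (0 : ℝ), HasDerivWithinAt (fun t : ℝ ↦ (t - c / t) / 2)
      ((1 + c / t ^ 2) / 2) (Ioi 0) t := fun t ht ↦ by
    have h := ((hasDerivAt_id t).sub ((hasDerivAt_inv (ne_of_gt ht)).const_mul c)).div_const 2
    convert! h.hasDerivWithinAt using 1
    ring
  rw [← integral_image_eq_integral_deriv_smul_of_monotoneOn measurableSet_Ioi hderiv hmono,
    image_half_sub_div_Ioi hc, setIntegral_univ]

/-- Gauss's complete elliptic integral of `a` and `b`, taken over the whole line, so that for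
positive `a` and `b` it is `π` divided by their arithmetic-geometric mean. -/
noncomputable def agmIntegral (a b : ℝ) : ℝ := ∫ x : ℝ, (√((x ^ 2 + a ^ 2) * (x ^ 2 + b ^ 2)))⁻¹

theorem agmIntegral_comm (a b : ℝ) : agmIntegral a b = agmIntegral b a := by
  simp only [agmIntegral, mul_comm]

theorem agmIntegral_eq_two_mul_integral_Ioi (a b : ℝ) :
    agmIntegral a b = 2 * ∫ x in Ioi 0, (√((x ^ 2 + a ^ 2) * (x ^ 2 + b ^ 2)))⁻¹ := by
  rw [← integral_comp_abs (f := fun x ↦ (√((x ^ 2 + a ^ 2) * (x ^ 2 + b ^ 2)))⁻¹)]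
  simp only [sq_abs, agmIntegral]

-- Landen's substitution `x = (t - g² / t) / 2`, which makes `x² + g²` a square.
theorem agmIntegral_eq_integral_inv_sqrt_quartic (m : ℝ) {g : ℝ} (hg : 0 < g) :
    agmIntegral m g =
      2 * ∫ t in Ioi 0, (√(t ^ 4 + (4 * m ^ 2 - 2 * g ^ 2) * t ^ 2 + g ^ 4))⁻¹ := by
  rw [agmIntegral, ← integral_comp_half_sub_div _ (pow_pos hg 2), ← integral_const_mul]
  refine setIntegral_congr_fun measurableSet_Ioi fun t (ht : 0 < t) ↦ ?_
  have hsubst : (((t - g ^ 2 / t) / 2) ^ 2 + m ^ 2) * (((t - g ^ 2 / t) / 2) ^ 2 + g ^ 2) =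
      ((t ^ 2 + g ^ 2) / (4 * t ^ 2)) ^ 2 *
        (t ^ 4 + (4 * m ^ 2 - 2 * g ^ 2) * t ^ 2 + g ^ 4) := by
    field_simp
    ring
  simp only [smul_eq_mul]
  rw [hsubst, sqrt_mul (by positivity), sqrt_sq (by positivity), mul_inv, ← mul_assoc]
  congr 1
  field_simp
  ring

theorem agmIntegral_arith_geom_mean {a b : ℝ} (ha : 0 < a) (hb : 0 < b) :
    agmIntegral ((a + b) / 2) (√(a * b)) = agmIntegral a b := by
  have hsq : √(a * b) ^ 2 = a * b := sq_sqrt (by positivity)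
  have hquartic (x : ℝ) : x ^ 4 + (4 * ((a + b) / 2) ^ 2 - 2 * (a * b)) * x ^ 2 + (a * b) ^ 2 =
      (x ^ 2 + a ^ 2) * (x ^ 2 + b ^ 2) := by ring
  rw [agmIntegral_eq_integral_inv_sqrt_quartic _ (by positivity),
    agmIntegral_eq_two_mul_integral_Ioi, show √(a * b) ^ 4 = (√(a * b) ^ 2) ^ 2 by ring, hsq]
  simp only [hquartic]

theorem agmIntegral_mul_mul {c : ℝ} (hc : 0 < c) (a b : ℝ) :
    agmIntegral (c * a) (c * b) = c⁻¹ * agmIntegral a b := by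
  have hscale (x : ℝ) : (√(((c * x) ^ 2 + (c * a) ^ 2) * ((c * x) ^ 2 + (c * b) ^ 2)))⁻¹ =
      c⁻¹ ^ 2 * (√((x ^ 2 + a ^ 2) * (x ^ 2 + b ^ 2)))⁻¹ := by
    rw [show ((c * x) ^ 2 + (c * a) ^ 2) * ((c * x) ^ 2 + (c * b) ^ 2) =
        (c ^ 2) ^ 2 * ((x ^ 2 + a ^ 2) * (x ^ 2 + b ^ 2)) by ring,
      sqrt_mul (by positivity), sqrt_sq (by positivity), mul_inv, inv_pow]
  have h := Measure.integral_comp_mul_left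
    (fun x ↦ (√((x ^ 2 + (c * a) ^ 2) * (x ^ 2 + (c * b) ^ 2)))⁻¹) c
  simp only [hscale, integral_const_mul, abs_of_pos (inv_pos.2 hc), smul_eq_mul] at h
  rw [agmIntegral, agmIntegral]
  field_simp at h ⊢
  exact h.symm

theorem agmIntegral_self {c : ℝ} (hc : 0 < c) : agmIntegral c c = π / c := by
  have hone : agmIntegral 1 1 = π := by
    rw [← integral_univ_inv_one_add_sq, agmIntegral]
    refine integral_congr_ae (.of_forall fun x ↦ ?_)
    dsimp only
    rw [one_pow, ← sq, sqrt_sq (by positivity), add_comm]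
  simpa [hone, div_eq_inv_mul] using agmIntegral_mul_mul hc 1 1

theorem integrable_inv_sqrt_sq_add_sq_mul {a b : ℝ} (ha : 0 < a) (hb : 0 < b) :
    Integrable fun x : ℝ ↦ (√((x ^ 2 + a ^ 2) * (x ^ 2 + b ^ 2)))⁻¹ := by
  have hcont : Continuous fun x : ℝ ↦ (√((x ^ 2 + a ^ 2) * (x ^ 2 + b ^ 2)))⁻¹ :=
    Continuous.inv₀ (by fun_prop) fun x ↦ by positivity
  obtain ⟨c, hc, hc1, hca, hcb⟩ : ∃ c : ℝ, 0 < c ∧ c ≤ 1 ∧ c ≤ a ^ 2 ∧ c ≤ b ^ 2 :=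
    ⟨min 1 (min (a ^ 2) (b ^ 2)), by positivity, by simp, by simp, by simp⟩
  refine (integrable_inv_one_add_sq.const_mul c⁻¹).mono' hcont.aestronglyMeasurable
    (.of_forall fun x ↦ ?_)
  have hle {d : ℝ} (hcd : c ≤ d ^ 2) : c * (1 + x ^ 2) ≤ x ^ 2 + d ^ 2 := by
    nlinarith [sq_nonneg x]
  rw [norm_of_nonneg (by positivity), ← mul_inv]
  refine inv_anti₀ (by positivity) (le_sqrt_of_sq_le ?_)
  rw [sq]
  exact mul_le_mul (hle hca) (hle hcb) (by positivity) (by positivity)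

theorem agmIntegral_anti {a b c d : ℝ} (ha : 0 < a) (hb : 0 < b) (hac : a ≤ c) (hbd : b ≤ d) :
    agmIntegral c d ≤ agmIntegral a b := by
  refine integral_mono (integrable_inv_sqrt_sq_add_sq_mul (ha.trans_le hac) (hb.trans_le hbd))
    (integrable_inv_sqrt_sq_add_sq_mul ha hb) fun x ↦ ?_
  dsimp only
  gcongr

theorem tendsto_agmIntegral {ι : Type*} {l : Filter ι} {u v : ι → ℝ} {c : ℝ} (hc : 0 < c)
    (hu : Tendsto u l (𝓝 c)) (hv : Tendsto v l (𝓝 c)) :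
    Tendsto (fun i ↦ agmIntegral (u i) (v i)) l (𝓝 (π / c)) := by
  have hmax : Tendsto (fun i ↦ π / max (u i) (v i)) l (𝓝 (π / c)) := by
    simpa only [Pi.div_def, max_self] using
      (tendsto_const_nhds (x := π)).div (hu.max hv) (by simpa using hc.ne')
  have hmin : Tendsto (fun i ↦ π / min (u i) (v i)) l (𝓝 (π / c)) := by
    simpa only [Pi.div_def, min_self] using
      (tendsto_const_nhds (x := π)).div (hu.min hv) (by simpa using hc.ne')
  refine tendsto_of_tendsto_of_tendsto_of_le_of_le' hmax hmin ?_ ?_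
  all_goals filter_upwards [hu.eventually_const_lt hc, hv.eventually_const_lt hc] with i hui hvi
  · rw [← agmIntegral_self (by positivity)]
    exact agmIntegral_anti hui hvi (le_max_left _ _) (le_max_right _ _)
  · rw [← agmIntegral_self (by positivity)]
    exact agmIntegral_anti (by positivity) (by positivity) (min_le_left _ _) (min_le_right _ _)

theorem integral_Ioo_rpow_mul_one_sub_rpow {p q : ℝ} (hp : 0 < p) (hq : 0 < q) :
    ∫ x in Ioo (0 : ℝ) 1, x ^ (p - 1) * (1 - x) ^ (q - 1) = Gamma p * Gamma q / Gamma (p + q) := by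
  have hofReal : ∫ x in Ioo (0 : ℝ) 1, (x : ℂ) ^ ((p : ℂ) - 1) * (1 - (x : ℂ)) ^ ((q : ℂ) - 1) =
      ∫ x in Ioo (0 : ℝ) 1, ((x ^ (p - 1) * (1 - x) ^ (q - 1) : ℝ) : ℂ) := by
    refine setIntegral_congr_fun measurableSet_Ioo fun x hx ↦ ?_
    rw [Complex.ofReal_mul, Complex.ofReal_cpow hx.1.le, Complex.ofReal_cpow (sub_pos.2 hx.2).le]
    push_cast
    rfl
  have h := ProbabilityTheory.beta_eq_betaIntegralReal p q hp hq
  rw [ProbabilityTheory.beta, Complex.betaIntegral, intervalIntegral.integral_of_le zero_le_one,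
    integral_Ioc_eq_integral_Ioo, hofReal, integral_complex_ofReal, Complex.ofReal_re] at h
  exact h.symm

theorem image_div_one_add_Ioi : (fun x : ℝ ↦ x / (1 + x)) '' Ioi 0 = Ioo 0 1 := by
  ext w
  constructor
  · rintro ⟨x, hx : 0 < x, rfl⟩
    exact ⟨by positivity, (div_lt_one (by positivity)).2 (by linarith)⟩
  · rintro ⟨hw0, hw1⟩
    have hsub : 0 < 1 - w := sub_pos.2 hw1
    exact ⟨w / (1 - w), div_pos hw0 hsub, by field_simp; ring⟩

theorem integral_Ioi_rpow_mul_one_add_rpow {p q : ℝ} (hp : 0 < p) (hq : 0 < q) :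
    ∫ x in Ioi (0 : ℝ), x ^ (p - 1) * (1 + x) ^ (-(p + q)) =
      Gamma p * Gamma q / Gamma (p + q) := by
  have hmono : MonotoneOn (fun x : ℝ ↦ x / (1 + x)) (Ioi 0) :=
    fun x (hx : 0 < x) y (hy : 0 < y) hxy ↦
      (div_le_div_iff₀ (by positivity) (by positivity)).2 (by linarith)
  have hderiv : ∀ x ∈ Ioi (0 : ℝ),
      HasDerivWithinAt (fun x : ℝ ↦ x / (1 + x)) ((1 + x) ^ (-2 : ℝ)) (Ioi 0) x :=
    fun x (hx : 0 < x) ↦ by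
      have h := (hasDerivAt_id x).div ((hasDerivAt_id x).const_add 1) (by positivity)
      convert! h.hasDerivWithinAt using 1
      simp [rpow_neg (by positivity : 0 ≤ 1 + x)]
  rw [← integral_Ioo_rpow_mul_one_sub_rpow hp hq, ← image_div_one_add_Ioi,
    integral_image_eq_integral_deriv_smul_of_monotoneOn measurableSet_Ioi hderiv hmono]
  refine (setIntegral_congr_fun measurableSet_Ioi fun x (hx : 0 < x) ↦ ?_).symm
  have hone_sub : 1 - x / (1 + x) = (1 + x)⁻¹ := by field_simp; ring
  have hpos : 0 < 1 + x := by positivity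
  simp only [smul_eq_mul]
  calc (1 + x) ^ (-2 : ℝ) * ((x / (1 + x)) ^ (p - 1) * (1 - x / (1 + x)) ^ (q - 1))
      = x ^ (p - 1) * ((1 + x) ^ (-2 : ℝ) * (1 + x) ^ (-(p - 1)) * (1 + x) ^ (-(q - 1))) := by
        rw [hone_sub, div_rpow hx.le hpos.le, inv_rpow hpos.le, rpow_neg hpos.le (p - 1),
          rpow_neg hpos.le (q - 1)]
        ring
    _ = x ^ (p - 1) * (1 + x) ^ (-(p + q)) := by
        rw [← rpow_add hpos, ← rpow_add hpos]
        ring_nf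

theorem integral_Ioi_inv_sqrt_one_add_pow_four :
    ∫ t in Ioi (0 : ℝ), (√(1 + t ^ 4))⁻¹ = Gamma (1 / 4) ^ 2 / (4 * √π) := by
  have hbeta := integral_Ioi_rpow_mul_one_add_rpow (p := 1 / 4) (q := 1 / 4) (by norm_num)
    (by norm_num)
  rw [← integral_comp_rpow_Ioi_of_pos four_pos] at hbeta
  have hintegrand (t : ℝ) (ht : 0 < t) : (4 * t ^ ((4 : ℝ) - 1)) •
      ((t ^ (4 : ℝ)) ^ ((1 / 4 : ℝ) - 1) * (1 + t ^ (4 : ℝ)) ^ (-(1 / 4 + 1 / 4) : ℝ)) =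
      4 * (√(1 + t ^ 4))⁻¹ := by
    rw [← rpow_mul ht.le, smul_eq_mul, mul_assoc, ← mul_assoc (t ^ _), ← rpow_add ht, sqrt_eq_rpow,
      ← rpow_neg (by positivity), ← rpow_natCast]
    norm_num
  rw [setIntegral_congr_fun measurableSet_Ioi hintegrand, integral_const_mul,
    show (1 / 4 + 1 / 4 : ℝ) = 1 / 2 by norm_num, Gamma_one_half_eq] at hbeta
  linear_combination hbeta / 4

theorem agmIntegral_one_inv_sqrt_two :
    agmIntegral 1 (√2)⁻¹ = Gamma (1 / 4) ^ 2 / (2 * √π) := by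
  have hcoeff : 4 * (√2)⁻¹ ^ 2 - 2 * 1 ^ 2 = (0 : ℝ) := by
    rw [inv_pow, sq_sqrt two_pos.le]
    norm_num
  rw [agmIntegral_comm, agmIntegral_eq_integral_inv_sqrt_quartic _ one_pos, hcoeff]
  simp only [zero_mul, add_zero, one_pow, add_comm _ (1 : ℝ)]
  rw [integral_Ioi_inv_sqrt_one_add_pow_four]
  ring

theorem agmIntegral_theta_sq_thetaFour_sq_two_mul {t : ℝ} (ht : 0 < t) :
    agmIntegral (theta (2 * t) ^ 2) (thetaFour (2 * t) ^ 2) =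
      agmIntegral (theta t ^ 2) (thetaFour t ^ 2) := by
  have hθ := theta_pos ht
  have hθ₄ := thetaFour_pos ht
  have harith : (theta t ^ 2 + thetaFour t ^ 2) / 2 = theta (2 * t) ^ 2 := by
    rw [theta_sq_add_thetaFour_sq ht, mul_div_cancel_left₀ _ two_ne_zero]
  have hgeom : √(theta t ^ 2 * thetaFour t ^ 2) = thetaFour (2 * t) ^ 2 := by
    rw [← mul_pow, sqrt_sq (by positivity), theta_mul_thetaFour ht]
  rw [← harith, ← hgeom, agmIntegral_arith_geom_mean (by positivity) (by positivity)]

theorem agmIntegral_theta_sq_thetaFour_sq {t : ℝ} (ht : 0 < t) :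
    agmIntegral (theta t ^ 2) (thetaFour t ^ 2) = π := by
  have hiter (n : ℕ) : agmIntegral (theta (2 ^ n * t) ^ 2) (thetaFour (2 ^ n * t) ^ 2) =
      agmIntegral (theta t ^ 2) (thetaFour t ^ 2) := by
    induction n with
    | zero => simp only [pow_zero, one_mul]
    | succ n ih => rw [pow_succ' (2 : ℝ) n, mul_assoc,
        agmIntegral_theta_sq_thetaFour_sq_two_mul (by positivity), ih]
  have htop : Tendsto (fun n : ℕ ↦ 2 ^ n * t) atTop atTop :=
    (tendsto_pow_atTop_atTop_of_one_lt one_lt_two).atTop_mul_const ht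
  have hlim := tendsto_agmIntegral one_pos
    (by simpa using (tendsto_theta_atTop.comp htop).pow 2)
    (by simpa using (tendsto_thetaFour_atTop.comp htop).pow 2)
  simpa [hiter] using hlim

theorem theta_one_sq : theta 1 ^ 2 = Gamma (1 / 4) ^ 2 / (2 * π * √π) := by
  have hθ := theta_pos one_pos
  have h := agmIntegral_mul_mul (pow_pos hθ 2) 1 (√2)⁻¹
  rw [mul_one, ← thetaFour_one_sq, agmIntegral_theta_sq_thetaFour_sq one_pos,
    agmIntegral_one_inv_sqrt_two] at h
  field_simp at h ⊢
  linear_combination h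

theorem Gamma_one_fourth_eq : Gamma (1 / 4) = π * √2 / Gamma (3 / 4) := by
  have hpos : 0 < Gamma (3 / 4) := Gamma_pos_of_pos (by norm_num)
  have hreflect := Gamma_mul_Gamma_one_sub (1 / 4)
  have hsq : √2 ^ 2 = (2 : ℝ) := sq_sqrt two_pos.le
  rw [show (1 : ℝ) - 1 / 4 = 3 / 4 by norm_num, mul_one_div, sin_pi_div_four] at hreflect
  rw [eq_div_iff hpos.ne', hreflect]
  field_simp
  linear_combination -hsq

/-- `θ(1) = π^{1/4}/Γ(3/4)`. -/
theorem theta_one : theta 1 = Real.pi ^ ((1 : ℝ)/4) / Real.Gamma (3/4) := by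
  have hΓ : 0 < Gamma (3 / 4) := Gamma_pos_of_pos (by norm_num)
  have hroot : (π ^ ((1 : ℝ) / 4)) ^ 2 = √π := by
    rw [← rpow_mul_natCast pi_pos.le, sqrt_eq_rpow]
    norm_num
  refine (pow_left_inj₀ (theta_pos one_pos).le (div_nonneg (by positivity) hΓ.le) two_ne_zero).1 ?_
  calc theta 1 ^ 2 = (π * √2 / Gamma (3 / 4)) ^ 2 / (2 * π * √π) := by
        rw [theta_one_sq, Gamma_one_fourth_eq]
    _ = √π / Gamma (3 / 4) ^ 2 := by
        field_simp
        rw [sq_sqrt two_pos.le, sq_sqrt pi_pos.le, mul_comm]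
    _ = (π ^ ((1 : ℝ) / 4) / Gamma (3 / 4)) ^ 2 := by rw [div_pow, hroot]
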